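/- Assume that 𝔠 (the cardinality of the continuum) is a regular cardinal. Let X be an uncountable Polish space and Σ = [X]^𝔠 the family of all subsets of X of cardinality exactly 𝔠. Then for every function f : X → ℝ, Player II has a winning strategy in the game G_1(Σ,f). -/

import Mathlib

/-!
Call `y` a complete accumulation point of `P` along the graph of `f` if for every `ε > 0` there are
`𝔠` many points `x ∈ P` with `(x, f x)` within `ε` of `(y, f y)`. Every `P` of size `𝔠` has such a
point: otherwise each point of the graph has a ball containing `(x, f x)` for fewer than `𝔠` many
`x ∈ P`, and, `X × ℝ` being second countable, countably many of these balls cover the graph over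
`P`, which would write `P` as a countable union of sets smaller than `𝔠`, contradicting regularity of `𝔠`.
Player II fixes such a `y` and, after `n` points have been played, answers with the part of `P` lying
within `1 / (n + 1)` of `(y, f y)` along the graph; every run then converges to `y` together with its values.
-/

open Filter Topology

/-- Player II has a winning strategy in the point-set game `G₁(Σ, f)`:
there is a strategy `σ` (assigning to the initial set `P` played by Player I and the finite
sequence of points played so far by Player I a set, intended as Player II's next move) such
that all its moves are legal (members of `Σ` that are subsets of `P`) and for every run
`x : ℕ → X` of Player I that is legal against `σ` (i.e. `x n` belongs to the set played by
Player II at the previous stage), the sequence `x` converges to some `y` and `f ∘ x`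
converges to `f y`. -/
def G1WinII {X : Type*} [MetricSpace X] (S : Set (Set X)) (f : X → ℝ) : Prop :=
  ∃ σ : Set X → List X → Set X,
    ∀ P ∈ S,
      (∀ h : List X, σ P h ∈ S ∧ σ P h ⊆ P) ∧
      ∀ x : ℕ → X,
        (∀ n : ℕ, x n ∈ σ P (List.ofFn fun i : Fin n => x i.1)) →
        ∃ y : X, Tendsto x atTop (nhds y) ∧
          Tendsto (fun n => f (x n)) atTop (nhds (f y))

universe u

/-- A set of size `𝔠` has a complete accumulation point along the graph of `f`. -/
theorem exists_complete_accumulation {X : Type u} [MetricSpace X]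
    [TopologicalSpace.SeparableSpace X]
    (hreg : Cardinal.IsRegular Cardinal.continuum.{u}) (f : X → ℝ) (P : Set X)
    (hP : Cardinal.mk P = Cardinal.continuum.{u}) :
    ∃ y : X, ∀ ε > 0, Cardinal.mk {x | x ∈ P ∧ dist (x, f x) (y, f y) < ε} =
      Cardinal.continuum.{u} := by
  have : SecondCountableTopology X := UniformSpace.secondCountable_of_separable X
  by_contra! H
  choose r hr hne using H
  have hlt : ∀ y, Cardinal.mk {x | x ∈ P ∧ dist (x, f x) (y, f y) < r y} <
      Cardinal.continuum.{u} := fun y =>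
    lt_of_le_of_ne (hP ▸ Cardinal.mk_le_mk_of_subset fun x hx => hx.1) (hne y)
  obtain ⟨t, htP, htc, hcov⟩ := TopologicalSpace.countable_cover_nhdsWithin
    (f := fun z : X × ℝ => Metric.ball z (r z.1)) (s := (fun x => (x, f x)) '' P)
    (fun z _ => mem_nhdsWithin_of_mem_nhds (Metric.ball_mem_nhds z (hr z.1)))
  -- The centres in `t` lie on the graph, hence are determined by their base points.
  have hsub : P ⊆ ⋃ y ∈ Prod.fst '' t, {x | x ∈ P ∧ dist (x, f x) (y, f y) < r y} := by
    intro x hx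
    obtain ⟨z, hz, hxz⟩ := Set.mem_iUnion₂.1 (hcov ⟨x, hx, rfl⟩)
    obtain ⟨y, -, rfl⟩ := htP hz
    exact Set.mem_iUnion₂.2 ⟨y, ⟨_, hz, rfl⟩, hx, hxz⟩
  have hcard : Cardinal.mk (Prod.fst '' t) < Cardinal.continuum.{u} :=
    ((htc.image _).le_aleph0).trans_lt Cardinal.aleph0_lt_continuum
  have := (Cardinal.card_biUnion_lt_iff_forall_of_isRegular hreg hcard).2 fun y _ => hlt y
  exact (hP ▸ Cardinal.mk_le_mk_of_subset hsub).not_gt this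

/-- Assume `𝔠` is a regular cardinal. If `X` is an uncountable Polish space (here: a
complete separable metric space) and `S` is the family of subsets of `X` of cardinality
exactly `𝔠`, then for every `f : X → ℝ` Player II has a winning strategy in `G₁(S, f)`. -/
theorem playerII_card_continuum {X : Type u} [MetricSpace X] [CompleteSpace X]
    [TopologicalSpace.SeparableSpace X] [Uncountable X]
    (hreg : Cardinal.IsRegular Cardinal.continuum.{u}) (f : X → ℝ) :
    G1WinII {A : Set X | Cardinal.mk A = Cardinal.continuum.{u}} f := by
  choose! y hy using exists_complete_accumulation hreg f
  refine ⟨fun P h => {x | x ∈ P ∧ dist (x, f x) (y P, f (y P)) < 1 / ((h.length : ℝ) + 1)},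
    fun P hP => ⟨fun h => ⟨hy P hP _ (by positivity), fun x hx => hx.1⟩, fun x hx => ⟨y P, ?_⟩⟩⟩
  have hlim : Tendsto (fun n => (x n, f (x n))) atTop (𝓝 (y P, f (y P))) := by
    rw [tendsto_iff_dist_tendsto_zero]
    refine squeeze_zero (fun _ => dist_nonneg) (fun n => ?_)
      tendsto_one_div_add_atTop_nhds_zero_nat
    simpa using (hx n).2.le
  exact ⟨(continuous_fst.tendsto _).comp hlim, (continuous_snd.tendsto _).comp hlim⟩
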